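/- The subtyping join is a least upper bound and the subtyping meet a greatest lower bound: for static security types S1, S2, S3, (1) if S1 ⋎ S2 is defined, S1 <: S3 and S2 <: S3, then S1 ⋎ S2 <: S3; (2) if S1 ⋏ S2 is defined, S3 <: S1 and S3 <: S2, then S3 <: S1 ⋏ S2. -/

import Mathlib

/-!
Both halves are proved simultaneously by structural induction on `S1`, for all `S2` and `S3`.
Inverting the two subtyping hypotheses forces the three types to have the same head constructor.
On labels the claim is the universal property of `⊔` and `⊓`; on arrows the codomain uses the same
half of the induction hypothesis and, by contravariance, the domain uses the other half.
-/

/-- Static security types: S ::= Bool_ℓ | S →_ℓ S. -/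
inductive SType (L : Type) where
  | bool (l : L)
  | arrow (S1 : SType L) (l : L) (S2 : SType L)

variable {L : Type} [Lattice L] [BoundedOrder L]

/-- Static subtyping. -/
inductive SSub : SType L → SType L → Prop where
  | bool {l l' : L} : l ≤ l' → SSub (.bool l) (.bool l')
  | arrow {S1 S1' S2 S2' : SType L} {l l' : L} :
      SSub S1' S1 → SSub S2 S2' → l ≤ l' →
      SSub (.arrow S1 l S2) (.arrow S1' l' S2')

/-- Label stamping on static types. -/
def SType.stamp : SType L → L → SType L
  | .bool l, l' => .bool (l ⊔ l')
  | .arrow S1 l S2, l' => .arrow S1 (l ⊔ l') S2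

mutual
/-- Partial subtyping join ⋎. -/
def sjoin : SType L → SType L → Option (SType L)
  | .bool l, .bool l' => some (.bool (l ⊔ l'))
  | .arrow S11 l S12, .arrow S21 l' S22 => do
      let m ← smeet S11 S21
      let j ← sjoin S12 S22
      pure (.arrow m (l ⊔ l') j)
  | _, _ => none
/-- Partial subtyping meet ⋏. -/
def smeet : SType L → SType L → Option (SType L)
  | .bool l, .bool l' => some (.bool (l ⊓ l'))
  | .arrow S11 l S12, .arrow S21 l' S22 => do
      let j ← sjoin S11 S21
      let m ← smeet S12 S22
      pure (.arrow j (l ⊓ l') m)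
  | _, _ => none
end
/-- the subtyping join is a least upper bound and the subtyping
meet a greatest lower bound. -/
theorem sjoin_least_smeet_greatest {L : Type} [Lattice L] [BoundedOrder L]
    (S1 S2 S3 : SType L) :
    (∀ S : SType L, sjoin S1 S2 = some S → SSub S1 S3 → SSub S2 S3 → SSub S S3) ∧
    (∀ S : SType L, smeet S1 S2 = some S → SSub S3 S1 → SSub S3 S2 → SSub S3 S) := by
  induction S1 generalizing S2 S3 with
  | bool l =>
    constructor
    · rintro S hS h1 h2
      cases h1 with
      | bool h1 =>
        cases h2 with
        | bool h2 =>
          simp only [sjoin, Option.some.injEq] at hS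
          subst hS
          exact .bool (sup_le h1 h2)
    · rintro S hS h1 h2
      cases h1 with
      | bool h1 =>
        cases h2 with
        | bool h2 =>
          simp only [smeet, Option.some.injEq] at hS
          subst hS
          exact .bool (le_inf h1 h2)
  | arrow A l B ihA ihB =>
    constructor
    · rintro S hS h1 h2
      cases h1 with
      | arrow a1 b1 c1 =>
        cases h2 with
        | arrow a2 b2 c2 =>
          simp only [sjoin, Option.bind_eq_bind, Option.bind_eq_some_iff, Option.pure_def,
            Option.some.injEq] at hS
          obtain ⟨m, hm, j, hj, rfl⟩ := hS
          -- contravariance: the domain of the join is a meet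
          exact .arrow ((ihA _ _).2 m hm a1 a2) ((ihB _ _).1 j hj b1 b2) (sup_le c1 c2)
    · rintro S hS h1 h2
      cases h1 with
      | arrow a1 b1 c1 =>
        cases h2 with
        | arrow a2 b2 c2 =>
          simp only [smeet, Option.bind_eq_bind, Option.bind_eq_some_iff, Option.pure_def,
            Option.some.injEq] at hS
          obtain ⟨j, hj, m, hm, rfl⟩ := hS
          exact .arrow ((ihA _ _).1 j hj a1 a2) ((ihB _ _).2 m hm b1 b2) (le_inf c1 c2)
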